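/- arXiv:2205.13017 — 2 statements merged into one kernel-verified Lean document; each statement's English description precedes it below -/
import Mathlib

section
/- Let f(u) = u⁸ − 12u⁷ + 60u⁶ − 168u⁵ + 348u⁴ − 720u³ + 1008u² − 288u + 144 ∈ ℚ[u], and let K be the splitting field of f over ℚ. Then K is a Galois extension of ℚ of degree 8, and Gal(K/ℚ) is isomorphic to the dihedral group D₈ of order 8. -/
open Polynomial

/-!
Put `β = √(3 + 2√3)`, a root of `g = X⁴ - 6X² - 3`, and let `E = ℚ(β, i) ⊆ ℂ`. Write
`t = √3 = (β² - 3) / 2` and `δ = t / β = (7β - β³) / 2`. The eight complex roots of `f` are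
`3/2 + e₁ t + e₂ i t / 2 ± (δ - e₂ i β) / 2` with signs `e₁, e₂`, so they lie in `E`, and
conversely `β` and `i` are polynomial expressions in them. Hence `E` is a splitting field
of `f` (`adjoin_rootSet_eq`).

Since `g` is Eisenstein at `3`, `[ℚ(β) : ℚ] = 4`; since `ℚ(β)` is real,
`[E : ℚ(β)] = 2`, so `[E : ℚ] = 8` (`finrank_adjoin`).

The roots of `g` are `±β, ±γ` with `γ = i δ`. An automorphism of `E` is determined by the images
of `β` and `i`, which leaves at most eight possibilities; as there are eight automorphisms, each
possibility occurs (`exists_aut`). So there are `R : β ↦ γ, i ↦ i`, which then sends `γ` to `-β`,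
and `S : β ↦ β, i ↦ -i`, which sends `γ` to `-γ`. They satisfy the relations of the dihedral
group, and the resulting homomorphism is injective between groups of order eight
(`gal_equiv_dihedral`).
-/

/-! ### Homomorphisms out of a dihedral group -/

/-- The homomorphism out of the dihedral group of order `8` given by two elements satisfying its
defining relations. -/
def dihedralLift {G : Type*} [Group G] (R S : G) (hR : R ^ 4 = 1) (hS : S * S = 1)
    (hSR : S * R * S = R⁻¹) : DihedralGroup 4 →* G :=
  have add (i j : ZMod 4) : R ^ (i + j).val = R ^ i.val * R ^ j.val := by
    rw [ZMod.val_add, ← pow_add, ← pow_eq_pow_mod _ hR]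
  have neg (i : ZMod 4) : R ^ (-i).val = (R ^ i.val)⁻¹ := by
    rw [eq_inv_iff_mul_eq_one, ← add]; simp
  have hS' : S⁻¹ = S := inv_eq_of_mul_eq_one_left hS
  have conj (i : ZMod 4) : R ^ i.val * S = S * (R ^ i.val)⁻¹ := by
    have h : (S * R * S⁻¹) ^ i.val = S * R ^ i.val * S⁻¹ := conj_pow
    rw [hS', hSR, inv_pow] at h
    rw [h, ← mul_assoc, ← mul_assoc, hS, one_mul]
  { toFun := fun x => match x with
      | .r i => R ^ i.val
      | .sr i => S * R ^ i.val
    map_one' := pow_zero R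
    map_mul' := by
      rintro (i | i) (j | j)
      · simp [add]
      · simp only [DihedralGroup.r_mul_sr]
        rw [sub_eq_neg_add, add, neg, ← mul_assoc, ← mul_assoc, conj]
      · simp [add, mul_assoc]
      · simp only [DihedralGroup.sr_mul_sr]
        rw [sub_eq_neg_add, add, neg, mul_assoc, ← mul_assoc _ S, conj, ← mul_assoc, ← mul_assoc,
          hS, one_mul] }

/-! ### The Galois group of `ℚ(β, i)` -/

section Galois

variable {E : Type*} [Field E] [Algebra ℚ E]

/-- If `E` has degree `8` and its automorphisms are determined by their values at `b` and `i`,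
then every pair of conjugates of `b` and `i` is the image of `(b, i)` under an automorphism. -/
lemma exists_aut [FiniteDimensional ℚ E] [IsGalois ℚ E] (h8 : Module.finrank ℚ E = 8) {b c i : E}
    (hb : b ^ 4 - 6 * b ^ 2 - 3 = 0) (hc : c ^ 2 = 6 - b ^ 2) (hi : i ^ 2 = -1)
    (hext : ∀ σ τ : E ≃ₐ[ℚ] E, σ b = τ b → σ i = τ i → σ = τ)
    (x y : E) (hx : x = b ∨ x = -b ∨ x = c ∨ x = -c) (hy : y = i ∨ y = -i) :
    ∃ σ : E ≃ₐ[ℚ] E, σ b = x ∧ σ i = y := by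
  classical
  let T : Finset (E × E) := {b, -b, c, -c} ×ˢ {i, -i}
  let Φ : (E ≃ₐ[ℚ] E) → E × E := fun σ => (σ b, σ i)
  have hΦ : Function.Injective Φ := fun σ τ h =>
    hext σ τ (congrArg Prod.fst h) (congrArg Prod.snd h)
  have hsub : Finset.univ.image Φ ⊆ T := by
    intro p hp
    obtain ⟨σ, -, rfl⟩ := Finset.mem_image.1 hp
    have h1 : σ b ^ 4 - 6 * σ b ^ 2 - 3 = 0 := by
      simpa only [map_sub, map_mul, map_pow, map_ofNat, map_zero] using congrArg σ hb
    have h2 : σ i ^ 2 = -1 := by simpa using congrArg σ hi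
    have h3 : (σ b - b) * (σ b + b) * ((σ b - c) * (σ b + c)) = 0 := by
      linear_combination h1 - hb - (σ b ^ 2 - b ^ 2) * hc
    have h4 : (σ i - i) * (σ i + i) = 0 := by linear_combination h2 - hi
    simp only [mul_eq_zero, sub_eq_zero, add_eq_zero_iff_eq_neg] at h3 h4
    simp only [T, Φ, Finset.mem_product, Finset.mem_insert, Finset.mem_singleton]
    tauto
  have hcard : T.card ≤ (Finset.univ.image Φ).card := by
    rw [Finset.card_image_of_injective _ hΦ, Finset.card_univ, ← Nat.card_eq_fintype_card,
      IsGalois.card_aut_eq_finrank, h8, Finset.card_product]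
    exact Nat.mul_le_mul (Finset.card_le_four (a := b)) (Finset.card_le_two (a := i))
  have hxy : (x, y) ∈ T := by
    simp only [T, Finset.mem_product, Finset.mem_insert, Finset.mem_singleton]
    exact ⟨hx, hy⟩
  rw [← Finset.eq_of_subset_of_card_le hsub hcard] at hxy
  obtain ⟨σ, -, hσ⟩ := Finset.mem_image.1 hxy
  exact ⟨σ, congrArg Prod.fst hσ, congrArg Prod.snd hσ⟩

lemma gal_equiv_dihedral [FiniteDimensional ℚ E] [IsGalois ℚ E] (h8 : Module.finrank ℚ E = 8)
    {b i : E} (hb : b ^ 4 - 6 * b ^ 2 - 3 = 0) (hi : i ^ 2 = -1)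
    (hext : ∀ σ τ : E ≃ₐ[ℚ] E, σ b = τ b → σ i = τ i → σ = τ) :
    Nonempty ((E ≃ₐ[ℚ] E) ≃* DihedralGroup 4) := by
  have : CharZero E := algebraRat.charZero E
  -- `c` is `i √3 / b`, written without division
  obtain ⟨c, hc⟩ : ∃ c, c = i * (7 * b - b ^ 3) / 2 := ⟨_, rfl⟩
  have hc2 : c ^ 2 = 6 - b ^ 2 := by
    rw [hc]
    linear_combination (7 * b - b ^ 3) ^ 2 / 4 * hi + (-(b ^ 2) / 4 + 2) * hb
  have hcb : i * (7 * c - c ^ 3) / 2 = -b := by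
    have h : i * (7 * c - c ^ 3) / 2 = i * c * (7 - c ^ 2) / 2 := by ring
    rw [h, hc2, hc]
    linear_combination (7 * b - b ^ 3) * (1 + b ^ 2) / 4 * hi + b / 4 * hb
  have hb0 : b ≠ 0 := by rintro rfl; norm_num at hb
  have hi0 : i ≠ 0 := by rintro rfl; norm_num at hi
  have hnb : -b ≠ b := fun h => hb0 (self_eq_neg.1 h.symm)
  have hni : -i ≠ i := fun h => hi0 (self_eq_neg.1 h.symm)
  have hbc : c ^ 2 ≠ b ^ 2 := by
    intro h
    have h3 : b ^ 2 = 3 := by linear_combination (hc2 - h) / 2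
    have : (-12 : E) = 0 := by linear_combination hb - (b ^ 2 - 3) * h3
    norm_num at this
  obtain ⟨R, hRb, hRi⟩ := exists_aut h8 hb hc2 hi hext c i (by simp) (by simp)
  obtain ⟨S, hSb, hSi⟩ := exists_aut h8 hb hc2 hi hext b (-i) (by simp) (by simp)
  have hRc : R c = -b := by
    have h := congrArg R hc
    simp only [map_div₀, map_mul, map_sub, map_pow, map_ofNat, hRb, hRi] at h
    rw [h, hcb]
  have hSc : S c = -c := by
    rw [hc]
    simp only [map_div₀, map_mul, map_sub, map_pow, map_ofNat, hSb, hSi]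
    ring
  have hR4 : R ^ 4 = 1 := by
    apply hext <;> simp [pow_succ, hRb, hRi, hRc]
  have hSS : S * S = 1 := by
    apply hext <;> simp [hSb, hSi]
  have hSR : S * R * S = R⁻¹ := by
    rw [eq_inv_iff_mul_eq_one]
    apply hext <;> simp [hRb, hRi, hRc, hSb, hSi, hSc]
  let φ := dihedralLift R S hR4 hSS hSR
  have hφ : Function.Injective φ := by
    rw [injective_iff_map_eq_one]
    rintro (k | k) hk
    · -- `R ^ k` moves `b` unless `k = 0`
      have h : (R ^ k.val) b = b := by
        have : R ^ k.val = 1 := hk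
        simp [this]
      fin_cases k
      · rfl
      · have h' : c = b := by simpa [ZMod.val, hRb] using h
        exact absurd (by rw [h']) hbc
      · have h' : -b = b := by simpa [ZMod.val, pow_succ, hRb, hRc] using h
        exact absurd h' hnb
      · have h' : -c = b := by simpa [ZMod.val, pow_succ, hRb, hRc] using h
        exact absurd (by rw [← h']; ring) hbc
    · -- `S * R ^ k` moves `i`
      have h : (S * R ^ k.val) i = i := by
        have : S * R ^ k.val = 1 := hk
        simp [this]
      have hRk (n : ℕ) : (R ^ n) i = i := by
        induction n with
        | zero => simp
        | succ n ih => rw [pow_succ, AlgEquiv.mul_apply, hRi, ih]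
      rw [AlgEquiv.mul_apply, hRk, hSi] at h
      exact absurd h hni
  have hbij : Function.Bijective φ := by
    refine (Nat.bijective_iff_injective_and_card φ).2 ⟨hφ, ?_⟩
    rw [DihedralGroup.nat_card, IsGalois.card_aut_eq_finrank, h8]
  exact ⟨(MulEquiv.ofBijective φ hbij).symm⟩

end Galois

/-! ### The field `ℚ(β, i)` -/

open Complex IntermediateField

/-- The positive real root `√(3 + 2√3)` of `X⁴ - 6X² - 3`. -/
noncomputable def realBeta : ℝ := √(3 + 2 * √3)

lemma realBeta_sq : realBeta ^ 2 = 3 + 2 * √3 := Real.sq_sqrt (by positivity)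

lemma beta_eq : (realBeta : ℂ) ^ 4 - 6 * (realBeta : ℂ) ^ 2 - 3 = 0 := by
  have h : realBeta ^ 4 - 6 * realBeta ^ 2 - 3 = 0 := by
    linear_combination (realBeta ^ 2 - 3 + 2 * √3) * realBeta_sq
      + 4 * Real.sq_sqrt (show (0 : ℝ) ≤ 3 by norm_num)
  exact_mod_cast h

/-- `X⁴ - 6X² - 3` is Eisenstein at `3`. -/
lemma irreducible_quartic : Irreducible (X ^ 4 - 6 * X ^ 2 - 3 : ℚ[X]) := by
  have hd : (X ^ 4 - 6 * X ^ 2 - 3 : ℤ[X]).natDegree = 4 := by compute_degree!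
  have hm : (X ^ 4 - 6 * X ^ 2 - 3 : ℤ[X]).Monic := by monicity!
  have h3 : Prime (3 : ℤ) := Int.prime_three
  have h : Irreducible (X ^ 4 - 6 * X ^ 2 - 3 : ℤ[X]) := by
    refine irreducible_of_eisenstein_criterion (P := Ideal.span {3})
      ((Ideal.span_singleton_prime (by norm_num)).2 h3) ?_ ?_ ?_ ?_ hm.isPrimitive
    · rw [hm.leadingCoeff, Ideal.mem_span_singleton]; norm_num
    · intro n hn
      rw [degree_eq_natDegree hm.ne_zero, hd] at hn
      have hn' : n < 4 := by exact_mod_cast hn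
      rw [Ideal.mem_span_singleton]
      have e : (X ^ 4 - 6 * X ^ 2 - 3 : ℤ[X]) = X ^ 4 - C 6 * X ^ 2 - C 3 := by simp
      rw [e]
      interval_cases n <;> simp [coeff_X_pow]
    · rw [degree_eq_natDegree hm.ne_zero, hd]; norm_num
    · rw [Ideal.span_singleton_pow, Ideal.mem_span_singleton, coeff_zero_eq_eval_zero]
      norm_num
  have := (Polynomial.Monic.irreducible_iff_irreducible_map_fraction_map (K := ℚ) hm).1 h
  simpa using this

lemma finrank_adjoin_beta : Module.finrank ℚ ℚ⟮(realBeta : ℂ)⟯ = 4 := by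
  have hm : (X ^ 4 - 6 * X ^ 2 - 3 : ℚ[X]).Monic := by monicity!
  have hmin : X ^ 4 - 6 * X ^ 2 - 3 = minpoly ℚ (realBeta : ℂ) :=
    minpoly.eq_of_irreducible_of_monic irreducible_quartic
      (by simpa only [map_sub, map_mul, map_pow, map_ofNat, aeval_X] using beta_eq) hm
  have hint : IsIntegral ℚ (realBeta : ℂ) := ⟨_, hm, by simpa [eval₂_eq_eval_map] using beta_eq⟩
  rw [adjoin.finrank hint, ← hmin]
  compute_degree!

/-- `ℚ(β)` consists of real numbers. -/
lemma I_notMem_adjoin_beta : I ∉ ℚ⟮(realBeta : ℂ)⟯ := by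
  intro h
  have hle : ℚ⟮(realBeta : ℂ)⟯ ≤ ((Complex.ofRealAm).restrictScalars ℚ).fieldRange := by
    rw [adjoin_simple_le_iff]
    exact ⟨realBeta, rfl⟩
  obtain ⟨x, hx⟩ := hle h
  have := congrArg Complex.im hx
  simp at this

lemma finrank_adjoin_I : Module.finrank ℚ⟮(realBeta : ℂ)⟯ ℚ⟮(realBeta : ℂ)⟯⟮I⟯ = 2 := by
  have hm : (X ^ 2 + 1 : ℚ⟮(realBeta : ℂ)⟯[X]).Monic := by monicity!
  have hd : (X ^ 2 + 1 : ℚ⟮(realBeta : ℂ)⟯[X]).natDegree = 2 := by compute_degree!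
  have hirr : Irreducible (X ^ 2 + 1 : ℚ⟮(realBeta : ℂ)⟯[X]) := by
    refine irreducible_of_degree_le_three_of_not_isRoot (by simp [hd]) fun x hx => ?_
    have h : (x : ℂ) ^ 2 + 1 = 0 := by
      have : x ^ 2 + 1 = 0 := by simpa using hx
      exact_mod_cast congrArg (algebraMap _ ℂ) this
    have h' : ((x : ℂ) - I) * (x + I) = 0 := by linear_combination h - I_sq
    rcases mul_eq_zero.1 h' with h' | h'
    · exact I_notMem_adjoin_beta (sub_eq_zero.1 h' ▸ x.2)
    · refine I_notMem_adjoin_beta ?_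
      rw [← neg_eq_of_add_eq_zero_right h']
      exact neg_mem x.2
  have hmin : X ^ 2 + 1 = minpoly ℚ⟮(realBeta : ℂ)⟯ I :=
    minpoly.eq_of_irreducible_of_monic hirr (by simp) hm
  have hint : IsIntegral ℚ⟮(realBeta : ℂ)⟯ I := ⟨_, hm, by simp⟩
  rw [adjoin.finrank hint, ← hmin, hd]

lemma finrank_adjoin : Module.finrank ℚ ℚ⟮(realBeta : ℂ), I⟯ = 8 := by
  have h := Module.finrank_mul_finrank ℚ ℚ⟮(realBeta : ℂ)⟯ ℚ⟮(realBeta : ℂ)⟯⟮I⟯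
  rw [finrank_adjoin_beta, finrank_adjoin_I] at h
  rw [← adjoin_simple_adjoin_simple]
  exact h.symm

/-! ### The roots of `f` -/

/-- The factorisation of the octic over any field of characteristic zero containing a root `b` of
`X⁴ - 6X² - 3` and a square root `i` of `-1`; then `t ^ 2 = 3` and `d = t / b`. The roots come in
four pairs with centres `3/2 ± t ± i t / 2`, and multiplying out the pairs with the same sign of
`t` eliminates `i`. -/
lemma octic_eq_prod {F : Type*} [Field F] [CharZero F] {b i t d : F}
    (hb : b ^ 4 - 6 * b ^ 2 - 3 = 0) (hi : i ^ 2 = -1) (ht : t = (b ^ 2 - 3) / 2)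
    (hd : d = (7 * b - b ^ 3) / 2) (z : F) :
    z^8 - 12*z^7 + 60*z^6 - 168*z^5 + 348*z^4 - 720*z^3 + 1008*z^2 - 288*z + 144 =
      (z - (3/2 - t - i*t/2 - (d + i*b)/2)) * (z - (3/2 - t - i*t/2 + (d + i*b)/2)) *
      ((z - (3/2 - t + i*t/2 - (d - i*b)/2)) * (z - (3/2 - t + i*t/2 + (d - i*b)/2))) *
      ((z - (3/2 + t - i*t/2 - (d + i*b)/2)) * (z - (3/2 + t - i*t/2 + (d + i*b)/2)) *
      ((z - (3/2 + t + i*t/2 - (d - i*b)/2)) * (z - (3/2 + t + i*t/2 + (d - i*b)/2)))) := by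
  have ht2 : t ^ 2 = 3 := by rw [ht]; linear_combination hb / 4
  have hd2 : d ^ 2 = b ^ 2 - 6 := by rw [hd]; linear_combination (b ^ 2 / 4 - 2) * hb
  have hdb : d * b = t := by rw [hd, ht]; linear_combination -hb / 2
  have hp : (d + i*b) ^ 2 = -6 + 2*i*t := by
    linear_combination hd2 + b ^ 2 * hi + 2 * i * hdb
  have hq : (d - i*b) ^ 2 = -6 - 2*i*t := by
    linear_combination hd2 + b ^ 2 * hi - 2 * i * hdb
  have pair (m p : F) : (z - (m - p/2)) * (z - (m + p/2)) = (z - m) ^ 2 - p ^ 2 / 4 := by ring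
  rw [pair, pair, pair, pair, hp, hq]
  have it2 : (i * t) ^ 2 = -3 := by rw [mul_pow, hi, ht2]; ring
  have quad (w : F) : ((w + i*t/2) ^ 2 - (-6 + 2*i*t)/4) * ((w - i*t/2) ^ 2 - (-6 - 2*i*t)/4) =
      w ^ 4 + 9/2 * w ^ 2 - 3 * w + 21/16 := by
    have h1 : (w + i*t/2) ^ 2 - (-6 + 2*i*t)/4 = w ^ 2 + 3/4 + i*t*(w - 1/2) := by
      linear_combination it2 / 4
    have h2 : (w - i*t/2) ^ 2 - (-6 - 2*i*t)/4 = w ^ 2 + 3/4 - i*t*(w - 1/2) := by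
      linear_combination it2 / 4
    rw [h1, h2]
    linear_combination -(w - 1/2) ^ 2 * it2
  -- the value of the resulting quartic at `y + s`, for the two square roots `s` of `3`
  have shift (y s : F) (hs : s ^ 2 = 3) : (y + s) ^ 4 + 9/2 * (y + s) ^ 2 - 3 * (y + s) + 21/16 =
      y ^ 4 + 45/2 * y ^ 2 - 3 * y + 381/16 + s * (4 * y ^ 3 + 21 * y - 3) := by
    linear_combination (6 * y ^ 2 + s ^ 2 + 3 + 9/2 + 4 * s * y) * hs
  have q1 := quad (z - 3/2 + t)
  have q2 := quad (z - 3/2 + -t)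
  rw [shift _ _ ht2] at q1
  rw [shift _ _ (by rw [neg_sq, ht2])] at q2
  have e1 : z - (3/2 - t - i*t/2) = z - 3/2 + t + i*t/2 := by ring
  have e2 : z - (3/2 - t + i*t/2) = z - 3/2 + t - i*t/2 := by ring
  have e3 : z - (3/2 + t - i*t/2) = z - 3/2 + -t + i*t/2 := by ring
  have e4 : z - (3/2 + t + i*t/2) = z - 3/2 + -t - i*t/2 := by ring
  rw [e1, e2, e3, e4, ← mul_assoc, q1, mul_assoc, q2]
  linear_combination (4 * (z - 3/2) ^ 3 + 21 * (z - 3/2) - 3) ^ 2 * ht2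

lemma adjoin_rootSet_eq (f : ℚ[X])
    (hf : f = X^8 - 12*X^7 + 60*X^6 - 168*X^5 + 348*X^4 - 720*X^3 + 1008*X^2
      - 288*X + 144) :
    adjoin ℚ (f.rootSet ℂ) = ℚ⟮(realBeta : ℂ), I⟯ := by
  have hf0 : f ≠ 0 := by
    have : f.Monic := by rw [hf]; monicity!
    exact this.ne_zero
  obtain ⟨b, hb⟩ : ∃ b : ℂ, b = realBeta := ⟨_, rfl⟩
  have hb4 := beta_eq
  rw [← hb] at hb4 ⊢
  obtain ⟨t, ht⟩ : ∃ t, t = (b ^ 2 - 3) / 2 := ⟨_, rfl⟩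
  obtain ⟨d, hd⟩ : ∃ d, d = (7 * b - b ^ 3) / 2 := ⟨_, rfl⟩
  have key := octic_eq_prod hb4 I_sq ht hd
  have hroot (z : ℂ) : z ∈ f.rootSet ℂ ↔
      z^8 - 12*z^7 + 60*z^6 - 168*z^5 + 348*z^4 - 720*z^3 + 1008*z^2 - 288*z + 144 = 0 := by
    rw [mem_rootSet_of_ne hf0, hf]
    simp only [map_sub, map_add, map_mul, map_pow, map_ofNat, aeval_X]
  apply le_antisymm
  · rw [adjoin_le_iff]
    intro z hz
    rw [hroot, key] at hz
    simp only [mul_eq_zero, sub_eq_zero] at hz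
    set E := ℚ⟮b, I⟯
    have hbE : b ∈ E := subset_adjoin _ _ (by simp)
    have hIE : I ∈ E := subset_adjoin _ _ (by simp)
    have n (k : ℕ) [k.AtLeastTwo] : (OfNat.ofNat k : ℂ) ∈ E := ofNat_mem E k
    have htE : t ∈ E := ht ▸ div_mem (sub_mem (pow_mem hbE 2) (n 3)) (n 2)
    have hdE : d ∈ E :=
      hd ▸ div_mem (sub_mem (mul_mem (n 7) hbE) (pow_mem hbE 3)) (n 2)
    have h3 : (3 / 2 : ℂ) ∈ E := div_mem (n 3) (n 2)
    have hIt : I * t / 2 ∈ E := div_mem (mul_mem hIE htE) (n 2)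
    have hp : (d + I * b) / 2 ∈ E := div_mem (add_mem hdE (mul_mem hIE hbE)) (n 2)
    have hq : (d - I * b) / 2 ∈ E := div_mem (sub_mem hdE (mul_mem hIE hbE)) (n 2)
    rcases hz with ((rfl | rfl) | (rfl | rfl)) | ((rfl | rfl) | (rfl | rfl)) <;>
      simp only [SetLike.mem_coe] <;>
      repeat' first | assumption | apply add_mem | apply sub_mem
  · -- the four roots with `e₁ = -1` already generate `ℚ(β, i)`
    set A := adjoin ℚ (f.rootSet ℂ)
    have n (k : ℕ) [k.AtLeastTwo] : (OfNat.ofNat k : ℂ) ∈ A := ofNat_mem A k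
    have mem {z : ℂ} (hz : z^8 - 12*z^7 + 60*z^6 - 168*z^5 + 348*z^4 - 720*z^3 + 1008*z^2
        - 288*z + 144 = 0) : z ∈ A := subset_adjoin _ _ ((hroot z).2 hz)
    have h0 : 3/2 - t - I*t/2 - (d + I*b)/2 ∈ A := mem (by rw [key]; simp)
    have h1 : 3/2 - t - I*t/2 + (d + I*b)/2 ∈ A := mem (by rw [key]; simp)
    have h2 : 3/2 - t + I*t/2 - (d - I*b)/2 ∈ A := mem (by rw [key]; simp)
    have h3 : 3/2 - t + I*t/2 + (d - I*b)/2 ∈ A := mem (by rw [key]; simp)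
    have ht2 : t ^ 2 = 3 := by rw [ht]; linear_combination hb4 / 4
    have htA : t ∈ A := by
      have := div_mem (sub_mem (n 6) (add_mem (add_mem h0 h1) (add_mem h2 h3))) (n 4)
      ring_nf at this
      exact this
    have hIA : I ∈ A := by
      have := div_mem (mul_mem htA (div_mem (sub_mem (add_mem h2 h3) (add_mem h0 h1)) (n 2))) (n 3)
      convert this using 1
      linear_combination -(I / 3) * ht2
    have hbA : b ∈ A := by
      have := mul_mem hIA (div_mem (sub_mem (sub_mem h3 h2) (sub_mem h1 h0)) (n 2))
      convert this using 1
      linear_combination b * I_sq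
    rw [adjoin_le_iff]
    rintro x (rfl | rfl)
    · exact hbA
    · exact hIA

lemma galois_of_isSplittingField (f : ℚ[X])
    (hf : f = X^8 - 12*X^7 + 60*X^6 - 168*X^5 + 348*X^4 - 720*X^3 + 1008*X^2
      - 288*X + 144)
    (L : Type*) [Field L] [Algebra ℚ L] [f.IsSplittingField ℚ L] :
    IsGalois ℚ L ∧ Module.finrank ℚ L = 8 ∧ Nonempty ((L ≃ₐ[ℚ] L) ≃* DihedralGroup 4) := by
  have hspl : f.IsSplittingField ℚ ℚ⟮(realBeta : ℂ), I⟯ := by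
    rw [← adjoin_rootSet_eq f hf]
    exact adjoin_rootSet_isSplittingField (IsAlgClosed.splits _)
  let e : ℚ⟮(realBeta : ℂ), I⟯ ≃ₐ[ℚ] L :=
    (IsSplittingField.algEquiv _ f).trans (IsSplittingField.algEquiv L f).symm
  have : FiniteDimensional ℚ ℚ⟮(realBeta : ℂ), I⟯ := IsSplittingField.finiteDimensional _ f
  have : Normal ℚ L := Normal.of_isSplittingField f
  have : IsGalois ℚ L := ⟨⟩
  have : IsGalois ℚ ℚ⟮(realBeta : ℂ), I⟯ := IsGalois.of_algEquiv e.symm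
  refine ⟨inferInstance, e.toLinearEquiv.finrank_eq ▸ finrank_adjoin, ?_⟩
  let b : ℚ⟮(realBeta : ℂ), I⟯ := ⟨realBeta, subset_adjoin _ _ (by simp)⟩
  let i : ℚ⟮(realBeta : ℂ), I⟯ := ⟨I, subset_adjoin _ _ (by simp)⟩
  have hb : b ^ 4 - 6 * b ^ 2 - 3 = 0 := Subtype.ext beta_eq
  have hi : i ^ 2 = -1 := Subtype.ext I_sq
  obtain ⟨φ⟩ := gal_equiv_dihedral finrank_adjoin hb hi fun σ τ h1 h2 => by
    have : σ.toAlgHom = τ.toAlgHom := by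
      apply adjoin_algHom_ext
      rintro x (rfl | rfl)
      · exact h1
      · exact h2
    exact AlgEquiv.coe_toAlgHom_injective this
  exact ⟨(AlgEquiv.autCongr e).symm.trans φ⟩

theorem stmt_18 (f : ℚ[X])
    (hf : f = X^8 - 12*X^7 + 60*X^6 - 168*X^5 + 348*X^4 - 720*X^3 + 1008*X^2
      - 288*X + 144) :
    IsGalois ℚ f.SplittingField ∧
    Module.finrank ℚ f.SplittingField = 8 ∧
    Nonempty (f.Gal ≃* DihedralGroup 4) := by
  -- `f.Gal` uses the algebra structure built into `f.SplittingField`, the other two conjuncts the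
  -- one coming from characteristic zero; `ℚ`-algebra structures are unique.
  let inst : Algebra ℚ f.SplittingField := SplittingField.instAlgebra f
  obtain ⟨h1, h2, h3⟩ := galois_of_isSplittingField f hf f.SplittingField
  refine ⟨?_, ?_, h3⟩
  · convert h1
    exact Subsingleton.elim _ _
  · convert h2
end

section
/- Let f(u) = u¹² + 6u¹¹ − 91u¹⁰ − 90u⁹ + 3370u⁸ − 14834u⁷ + 38281u⁶ − 79946u⁵ + 123730u⁴ − 130890u³ + 127789u² − 57586u + 58381 ∈ ℚ[u], and let K be the splitting field of f over ℚ. Then K is a Galois extension of ℚ of degree 12, and Gal(K/ℚ) is isomorphic to the dihedral group D₁₂ of order 12. -/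
open Polynomial

/-!
The splitting field of `f` is `ℚ(∛10, √-3, √5)`, the splitting field of `(X³ - 10)(X² - 5)`.

Whenever `c³ = 10`, `s² = -3` and `t² = 5`, the element
`quadRoot c s t = -1/2 - c - c²/2 - t(5/6 + c/3 + 2c²/15) + s t c²/10` is a root of `f`, and `f` is
the product of the twelve linear factors obtained by letting `c`, `s`, `t` run over all the choices
(`f_eq_prod`). This product is computed in three norm steps: pairing `s` with `-s` gives a
quadratic over `ℚ(c, t)`, multiplying over the three cube roots of `10` gives a sextic over `ℚ(t)`,
and multiplying over `±t` gives `f`. Conversely `c` and `t` are rational expressions in these roots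
(`cubeRoot_mem` and `sqrt_mem`), so both polynomials have the same splitting field `M`
(`isSplittingField_f`).

The degree of `M` is divisible by `3` because `X³ - 10` is irreducible, and by `4` because `ℚ(√5)`
is quadratic and real, hence does not contain `√-3` (`twelve_dvd_finrank`). On the other hand
`Gal(M/ℚ)` acts faithfully on the three cube roots of `10` and the two square roots of `5`, so it
embeds in `S₃ × S₂`, which has order `12`. The embedding is therefore an isomorphism, and `S₃ × S₂`
is the dihedral group of order `12`.
-/

/-! ### The roots of `f` -/

section Roots

variable {M : Type*} [Field M] [CharZero M]

/-- The root of `f` attached to a cube root `c` of `10`, a square root `s` of `-3` and a square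
root `t` of `5`. -/
def quadRoot (c s t : M) : M :=
  -1/2 - c - c^2/2 - t*(5/6 + c/3 + 2*c^2/15) + s*t*c^2/10

/-- The sextic factor of `f` over `ℚ(√5)`, where `t = √5`. -/
def sextic (t x : M) : M :=
  (x^6 + 3*x^5 + 25/2*x^4 - 220*x^3 + 885/2*x^2 - 17*x + 399)
    + t*(5*x^5 - 11/2*x^4 - 76*x^3 + 311/2*x^2 + 31*x + 142)

lemma quadRoot_mul_conj {c s t : M} (hc : c^3 = 10) (hs : s^2 = -3) (ht : t^2 = 5) (x : M) :
    (x - quadRoot c s t) * (x - quadRoot c (-s) t)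
      = (x + 1/2 + 5*t/6 + (1 + t/3)*c + (1/2 + 2*t/15)*c^2)^2 + 3*c/2 := by
  unfold quadRoot
  linear_combination (-t^2*c^4/100)*hs + 3*c^4/100*ht + 15/100*c*hc

/-- The norm form of the pure cubic extension generated by a cube root `c` of `10`. -/
lemma cubic_norm {c w : M} (hc : c^3 = 10) (hw : w^2 + w + 1 = 0) (a b d : M) :
    (a + b*c + d*c^2) * (a + b*(c*w) + d*(c*w)^2) * (a + b*(c*w^2) + d*(c*w^2)^2)
      = a^3 + 10*b^3 + 100*d^3 - 30*a*b*d := by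
  grind

lemma sextic_eq_prod {c w t : M} (hc : c^3 = 10) (hw : w^2 + w + 1 = 0) (ht : t^2 = 5) (x : M) :
    (x - quadRoot c (2*w+1) t) * (x - quadRoot c (-(2*w+1)) t)
      * ((x - quadRoot (c*w) (2*w+1) t) * (x - quadRoot (c*w) (-(2*w+1)) t))
      * ((x - quadRoot (c*w^2) (2*w+1) t) * (x - quadRoot (c*w^2) (-(2*w+1)) t))
      = sextic t x := by
  have hs : (2*w+1)^2 = -3 := by linear_combination 4*hw
  have hw3 : w^3 = 1 := by linear_combination (w-1)*hw
  have hc1 : (c*w)^3 = 10 := by linear_combination w^3*hc + 10*hw3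
  have hc2 : (c*w^2)^3 = 10 := by linear_combination w^6*hc + 10*(w^3+1)*hw3
  rw [quadRoot_mul_conj hc hs ht, quadRoot_mul_conj hc1 hs ht, quadRoot_mul_conj hc2 hs ht]
  -- Reducing by `c³ = 10` writes each quadratic factor as `a + b c + d c²` with `a`, `b`, `d`
  -- independent of the choice of `c`.
  have key : ∀ e : M, e^3 = 10 →
      (x + 1/2 + 5*t/6 + (1 + t/3)*e + (1/2 + 2*t/15)*e^2)^2 + 3*e/2
        = ((x + 1/2 + 5*t/6)^2 + 20*(1 + t/3)*(1/2 + 2*t/15))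
          + (2*(x + 1/2 + 5*t/6)*(1 + t/3) + 10*(1/2 + 2*t/15)^2 + 3/2)*e
          + ((1 + t/3)^2 + 2*(x + 1/2 + 5*t/6)*(1/2 + 2*t/15))*e^2 := fun e he => by
    linear_combination (2*(1 + t/3)*(1/2 + 2*t/15) + (1/2 + 2*t/15)^2*e)*he
  rw [key c hc, key _ hc1, key _ hc2, cubic_norm hc hw]
  unfold sextic
  -- The coefficient is the quotient by `t² - 5` of the difference of the two sides.
  linear_combination ((31/4)*x^4 + (39/10)*x^3*t + (-65/2)*x^3 + (15/16)*x^2*t^2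
    + (-303/20)*x^2*t + (405/16)*x^2 + (9/80)*x*t^3 + (-213/80)*x*t^2 + (1479/80)*x*t
    + (569/16)*x + (9/1600)*t^4 + (-27/160)*t^3 + (183/80)*t^2 + (-897/160)*t + 523/64)*ht

lemma sextic_mul_conj {t : M} (ht : t^2 = 5) (x : M) :
    sextic t x * sextic (-t) x
      = x^12 + 6*x^11 - 91*x^10 - 90*x^9 + 3370*x^8 - 14834*x^7 + 38281*x^6
        - 79946*x^5 + 123730*x^4 - 130890*x^3 + 127789*x^2 - 57586*x + 58381 := by
  unfold sextic
  linear_combination (-(5*x^5 - 11/2*x^4 - 76*x^3 + 311/2*x^2 + 31*x + 142)^2)*ht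

/-- The polynomial `f` of the theorem. -/
noncomputable def fPoly : ℚ[X] :=
  X^12 + 6*X^11 - 91*X^10 - 90*X^9 + 3370*X^8 - 14834*X^7 + 38281*X^6
      - 79946*X^5 + 123730*X^4 - 130890*X^3 + 127789*X^2 - 57586*X + 58381

variable [Algebra ℚ M]

lemma aeval_fPoly {A : Type*} [CommRing A] [Algebra ℚ A] (x : A) : aeval x fPoly
    = x^12 + 6*x^11 - 91*x^10 - 90*x^9 + 3370*x^8 - 14834*x^7 + 38281*x^6
        - 79946*x^5 + 123730*x^4 - 130890*x^3 + 127789*x^2 - 57586*x + 58381 := by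
  simp only [fPoly, map_add, map_sub, map_mul, map_pow, aeval_X, map_ofNat]

/-- The sextic attached to `t` as a product of linear factors, where `w` is a primitive cube root
of unity, so that `2w + 1` is a square root of `-3`. -/
noncomputable def sexticPoly (c w t : M) : M[X] :=
  (X - C (quadRoot c (2*w+1) t)) * (X - C (quadRoot c (-(2*w+1)) t))
    * ((X - C (quadRoot (c*w) (2*w+1) t)) * (X - C (quadRoot (c*w) (-(2*w+1)) t)))
    * ((X - C (quadRoot (c*w^2) (2*w+1) t)) * (X - C (quadRoot (c*w^2) (-(2*w+1)) t)))

lemma f_eq_prod {c w t : M} (hc : c^3 = 10) (hw : w^2 + w + 1 = 0) (ht : t^2 = 5) :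
    fPoly.map (algebraMap ℚ M) = sexticPoly c w t * sexticPoly c w (-t) := by
  have ht' : (-t)^2 = 5 := by rw [neg_sq, ht]
  refine Polynomial.funext fun x => ?_
  rw [eval_map_algebraMap, aeval_fPoly, ← sextic_mul_conj ht x, ← sextic_eq_prod hc hw ht,
    ← sextic_eq_prod hc hw ht']
  simp [sexticPoly]

lemma aeval_quadRoot {c w t : M} (hc : c^3 = 10) (hw : w^2 + w + 1 = 0) (ht : t^2 = 5) :
    aeval (quadRoot c (2*w+1) t) fPoly = 0 := by
  rw [← eval_map_algebraMap, f_eq_prod hc hw ht]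
  simp [sexticPoly]

lemma quadRoot_mem {c w t : M} (hc : c^3 = 10) (hw : w^2 + w + 1 = 0) (ht : t^2 = 5) :
    quadRoot c (2*w+1) t ∈ Algebra.adjoin ℚ (fPoly.rootSet M) := by
  refine Algebra.subset_adjoin (mem_rootSet.2 ⟨fun h => ?_, aeval_quadRoot hc hw ht⟩)
  have := congrArg (eval 0) h
  simp [fPoly] at this

/-- The conjugate root `quadRoot c (-s) t` corresponds to replacing `ω` by `ω² = -1 - ω`. -/
lemma quadRoot_conj_mem {c w t : M} (hc : c^3 = 10) (hw : w^2 + w + 1 = 0) (ht : t^2 = 5) :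
    quadRoot c (-(2*w+1)) t ∈ Algebra.adjoin ℚ (fPoly.rootSet M) := by
  have hw' : (-1-w)^2 + (-1-w) + 1 = 0 := by linear_combination hw
  have := quadRoot_mem hc hw' ht
  rwa [show 2*(-1-w)+1 = -(2*w+1) by ring] at this

lemma rat_mul_mem {A : Type*} [CommRing A] [Algebra ℚ A] (S : Subalgebra ℚ A) (q : ℚ) {x : A}
    (hx : x ∈ S) : algebraMap ℚ A q * x ∈ S :=
  S.mul_mem (S.algebraMap_mem q) hx

/-- The sum of the four roots attached to `c` is `-2 - 4c - 2c²`, and `y = c + c²/2` satisfies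
`y² - 2y - 10 = c/2`. -/
lemma cubeRoot_mem {c w t : M} (hc : c^3 = 10) (hw : w^2 + w + 1 = 0) (ht : t^2 = 5) :
    c ∈ Algebra.adjoin ℚ (fPoly.rootSet M) := by
  set S := Algebra.adjoin ℚ (fPoly.rootSet M)
  have ht' : (-t)^2 = 5 := by rw [neg_sq, ht]
  have h := S.add_mem
    (S.add_mem (quadRoot_mem hc hw ht) (quadRoot_conj_mem hc hw ht))
    (S.add_mem (quadRoot_mem hc hw ht') (quadRoot_conj_mem hc hw ht'))
  have hy : c + c^2/2 ∈ S := by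
    have := S.sub_mem (rat_mul_mem S (-1/4) h) (S.algebraMap_mem (1/2))
    convert this using 1
    simp only [quadRoot, map_div₀, map_neg, map_one, map_ofNat]
    ring
  have := rat_mul_mem S 2 (S.sub_mem (S.sub_mem (S.mul_mem hy hy) (rat_mul_mem S 2 hy))
    (S.algebraMap_mem 10))
  convert this using 1
  simp only [map_ofNat]
  linear_combination (-2 - c/2)*hc

/-- The sum of the two roots attached to `c` and `t` is `-1 - 2c - c² - t(25 + 10c + 4c²)/15`,
and `(5 - 2c)(25 + 10c + 4c²) = 125 - 8c³ = 45`. -/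
lemma sqrt_mem {c w t : M} (hc : c^3 = 10) (hw : w^2 + w + 1 = 0) (ht : t^2 = 5) :
    t ∈ Algebra.adjoin ℚ (fPoly.rootSet M) := by
  have hcS := cubeRoot_mem hc hw ht
  set S := Algebra.adjoin ℚ (fPoly.rootSet M)
  have h := S.add_mem (quadRoot_mem hc hw ht) (quadRoot_conj_mem hc hw ht)
  have h1 := S.add_mem (S.add_mem h (S.algebraMap_mem 1))
    (S.add_mem (rat_mul_mem S 2 hcS) (S.mul_mem hcS hcS))
  have := S.mul_mem h1 (rat_mul_mem S (-1/3)
    (S.sub_mem (S.algebraMap_mem 5) (rat_mul_mem S 2 hcS)))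
  convert this using 1
  simp only [quadRoot, map_div₀, map_neg, map_one, map_ofNat]
  linear_combination (8/45*t)*hc

end Roots

/-! ### The field `ℚ(∛10, √-3, √5)` -/

/-- A rational number of `5`-adic valuation `1` is not a perfect power. -/
lemma rat_pow_ne {n : ℕ} (hn : 2 ≤ n) {a : ℚ} (ha : padicValRat 5 a = 1) (b : ℚ) : b^n ≠ a := by
  have : Fact (Nat.Prime 5) := ⟨by norm_num⟩
  rintro rfl
  rw [padicValRat.pow] at ha
  have := Int.isUnit_iff.1 (IsUnit.of_mul_eq_one _ ha)
  omega

lemma padicValRat_five : padicValRat 5 (5 : ℚ) = 1 := by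
  have : Fact (Nat.Prime 5) := ⟨by norm_num⟩
  exact_mod_cast padicValRat.self (p := 5) (by norm_num)

lemma padicValRat_ten : padicValRat 5 (10 : ℚ) = 1 := by
  have : Fact (Nat.Prime 5) := ⟨by norm_num⟩
  rw [show (10 : ℚ) = 5 * ((2 : ℕ) : ℚ) by norm_num, padicValRat.mul (by norm_num) (by norm_num),
    padicValRat_five, padicValRat.of_nat, padicValNat.eq_zero_of_not_dvd (by norm_num)]
  rfl

lemma irreducible_cubic : Irreducible (X^3 - C 10 : ℚ[X]) :=
  X_pow_sub_C_irreducible_of_prime Nat.prime_three (rat_pow_ne (by norm_num) padicValRat_ten)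

lemma irreducible_quadratic : Irreducible (X^2 - C 5 : ℚ[X]) :=
  X_pow_sub_C_irreducible_of_prime Nat.prime_two (rat_pow_ne le_rfl padicValRat_five)

/-- The polynomial `(X³ - 10)(X² - 5)`, whose splitting field is `ℚ(∛10, √-3, √5)`. -/
noncomputable def gPoly : ℚ[X] := (X^3 - C 10) * (X^2 - C 5)

lemma gPoly_ne_zero : gPoly ≠ 0 :=
  mul_ne_zero irreducible_cubic.ne_zero irreducible_quadratic.ne_zero

/-- A field in which `(X³ - 10)(X² - 5)` splits contains a cube root of `10`, a primitive cube root
of unity and a square root of `5`. -/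
lemma exists_generators {M : Type*} [Field M] [Algebra ℚ M]
    (h : (gPoly.map (algebraMap ℚ M)).Splits) :
    ∃ c w t : M, c^3 = 10 ∧ w^2 + w + 1 = 0 ∧ t^2 = 5 := by
  have : CharZero M := charZero_of_injective_algebraMap (algebraMap ℚ M).injective
  have hne : gPoly.map (algebraMap ℚ M) ≠ 0 := (map_ne_zero gPoly_ne_zero)
  have hmap : gPoly.map (algebraMap ℚ M) = (X^3 - C 10) * (X^2 - C 5) := by
    simp [gPoly]
  rw [hmap] at h hne
  obtain ⟨t, ht⟩ := (h.of_dvd hne (dvd_mul_left _ _)).exists_eval_eq_zero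
    (by rw [degree_X_pow_sub_C (by norm_num)]; norm_num)
  have h3 := h.of_dvd hne (dvd_mul_right _ _)
  obtain ⟨c, hc⟩ := h3.exists_eval_eq_zero
    (by rw [degree_X_pow_sub_C (by norm_num)]; norm_num)
  simp [sub_eq_zero] at ht hc
  have hc0 : c ≠ 0 := by rintro rfl; norm_num at hc
  -- The quotient of `X³ - 10` by `X - c` splits too, and its roots are `c ω` and `c ω²`.
  have hfac : (X^3 - C 10 : M[X]) = (X - C c) * (C 1 * X^2 + C c * X + C (c^2)) := by
    rw [← hc]; simp only [map_pow, map_one]; ring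
  obtain ⟨d, hd⟩ := (h3.of_dvd (left_ne_zero_of_mul hne)
    (hfac ▸ dvd_mul_left _ _)).exists_eval_eq_zero
    (by rw [degree_quadratic one_ne_zero]; norm_num)
  simp at hd
  refine ⟨c, d/c, t, hc, ?_, ht⟩
  field_simp
  linear_combination hd

/-- The field `ℚ(√5)` embeds in `ℝ`, so it contains no square root of `-3`. -/
lemma sq_ne_neg_three {M : Type*} [Field M] [Algebra ℚ M] {t : M} (ht : t^2 = 5)
    (e : IntermediateField.adjoin ℚ {t}) : e^2 ≠ -3 := by
  intro he
  have hmin : X^2 - C 5 = minpoly ℚ t := minpoly.eq_of_irreducible_of_monic irreducible_quadratic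
    (by simp [ht]) (monic_X_pow_sub_C _ (by norm_num))
  have hint : IsIntegral ℚ t := ⟨X^2 - C 5, monic_X_pow_sub_C _ (by norm_num), by simp [ht]⟩
  let φ := (IntermediateField.algHomAdjoinIntegralEquiv ℚ (K := ℝ) hint).symm
    ⟨√5, by rw [mem_aroots, ← hmin]; simp [irreducible_quadratic.ne_zero]⟩
  have := congrArg φ he
  simp only [map_pow, map_neg, map_ofNat] at this
  nlinarith [sq_nonneg (φ e)]

lemma twelve_dvd_finrank {M : Type*} [Field M] [Algebra ℚ M] [FiniteDimensional ℚ M] {c w t : M}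
    (hc : c^3 = 10) (hw : w^2 + w + 1 = 0) (ht : t^2 = 5) : 12 ∣ Module.finrank ℚ M := by
  have h3 : 3 ∣ Module.finrank ℚ M := by
    have := minpoly.degree_dvd (IsIntegral.of_finite ℚ c)
    rwa [← minpoly.eq_of_irreducible_of_monic irreducible_cubic (by simp [hc])
      (monic_X_pow_sub_C _ (by norm_num)), natDegree_X_pow_sub_C] at this
  let E := IntermediateField.adjoin ℚ {t}
  have h2 : Module.finrank ℚ E = 2 := by
    rw [IntermediateField.adjoin.finrank (IsIntegral.of_finite ℚ t),
      ← minpoly.eq_of_irreducible_of_monic irreducible_quadratic (by simp [ht])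
      (monic_X_pow_sub_C _ (by norm_num)), natDegree_X_pow_sub_C]
  have h2' : 2 ∣ Module.finrank E M := by
    have hirr : Irreducible (X^2 - C (-3) : E[X]) :=
      X_pow_sub_C_irreducible_of_prime Nat.prime_two (sq_ne_neg_three ht)
    have := minpoly.degree_dvd (IsIntegral.of_finite E (2*w+1))
    rwa [← minpoly.eq_of_irreducible_of_monic hirr
      (by simp only [map_sub, map_pow, aeval_X, map_neg, map_ofNat]
          linear_combination 4*hw)
      (monic_X_pow_sub_C _ (by norm_num)), natDegree_X_pow_sub_C] at this
  have h4 : 4 ∣ Module.finrank ℚ M := by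
    rw [← Module.finrank_mul_finrank ℚ E M, h2]
    exact mul_dvd_mul_left 2 h2'
  omega

lemma isSplittingField_f {M : Type*} [Field M] [Algebra ℚ M] (h : IsSplittingField ℚ M gPoly) :
    IsSplittingField ℚ M fPoly := by
  have : CharZero M := charZero_of_injective_algebraMap (algebraMap ℚ M).injective
  obtain ⟨c, w, t, hc, hw, ht⟩ := exists_generators (IsSplittingField.splits M gPoly)
  refine ⟨?_, ?_⟩
  · rw [f_eq_prod hc hw ht]
    have h : ∀ u, (sexticPoly c w u).Splits := fun u =>
      (((Splits.X_sub_C _).mul (Splits.X_sub_C _)).mul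
        ((Splits.X_sub_C _).mul (Splits.X_sub_C _))).mul
        ((Splits.X_sub_C _).mul (Splits.X_sub_C _))
    exact (h t).mul (h (-t))
  · rw [eq_top_iff, ← IsSplittingField.adjoin_rootSet M gPoly]
    refine Algebra.adjoin_le fun x hx => ?_
    have hx := (mem_rootSet.1 hx).2
    simp only [gPoly, map_mul, mul_eq_zero, map_sub, map_pow, aeval_X, map_ofNat,
      sub_eq_zero] at hx
    rcases hx with hx | hx
    · exact cubeRoot_mem hx hw ht
    · exact sqrt_mem hc hw hx

/-! ### The Galois group -/

lemma isGalois_and_finrank {M : Type*} [Field M] [Algebra ℚ M] (p : ℚ[X])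
    (h : IsSplittingField ℚ M p) :
    IsGalois ℚ M ∧ Module.finrank ℚ M = Nat.card (M ≃ₐ[ℚ] M) := by
  have := IsSplittingField.finiteDimensional M p
  have := Normal.of_isSplittingField (E := M) p
  have : IsGalois ℚ M := ⟨⟩
  exact ⟨this, (IsGalois.card_aut_eq_finrank ℚ M).symm⟩

lemma twelve_le_card_aut {M : Type*} [Field M] [Algebra ℚ M] (h : IsSplittingField ℚ M gPoly) :
    12 ≤ Nat.card (M ≃ₐ[ℚ] M) := by
  obtain ⟨c, w, t, hc, hw, ht⟩ := exists_generators (IsSplittingField.splits M gPoly)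
  have := IsSplittingField.finiteDimensional M gPoly
  rw [← (isGalois_and_finrank gPoly h).2]
  exact Nat.le_of_dvd Module.finrank_pos (twelve_dvd_finrank hc hw ht)

lemma card_rootSet {p : ℚ[X]} (hp : Irreducible p) :
    Nat.card (p.rootSet p.SplittingField) = p.natDegree := by
  rw [Nat.card_eq_fintype_card]
  exact card_rootSet_eq_natDegree hp.separable (SplittingField.splits p)

lemma card_perm_rootSets : Nat.card (Equiv.Perm ((X^3 - C 10 : ℚ[X]).rootSet
      (X^3 - C 10 : ℚ[X]).SplittingField) ×
    Equiv.Perm ((X^2 - C 5 : ℚ[X]).rootSet (X^2 - C 5 : ℚ[X]).SplittingField)) = 12 := by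
  rw [Nat.card_prod, Nat.card_perm, Nat.card_perm, card_rootSet irreducible_cubic,
    card_rootSet irreducible_quadratic, natDegree_X_pow_sub_C, natDegree_X_pow_sub_C]
  rfl

/-- The Galois group of `(X³ - 10)(X² - 5)` is the full group of permutations of the roots
preserving the two factors. -/
lemma nonempty_gal_equiv : Nonempty (gPoly.Gal ≃* Equiv.Perm (Fin 3) × Equiv.Perm (Fin 2)) := by
  have : Fact ((X^3 - C 10 : ℚ[X]).map (algebraMap ℚ (X^3 - C 10 : ℚ[X]).SplittingField)).Splits :=
    ⟨SplittingField.splits _⟩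
  have : Fact ((X^2 - C 5 : ℚ[X]).map (algebraMap ℚ (X^2 - C 5 : ℚ[X]).SplittingField)).Splits :=
    ⟨SplittingField.splits _⟩
  let φ := ((Gal.galActionHom (X^3 - C 10 : ℚ[X]) (X^3 - C 10 : ℚ[X]).SplittingField).prodMap
    (Gal.galActionHom (X^2 - C 5 : ℚ[X]) (X^2 - C 5 : ℚ[X]).SplittingField)).comp
    (Gal.restrictProd (X^3 - C 10 : ℚ[X]) (X^2 - C 5))
  have hinj : Function.Injective φ :=
    ((Gal.galActionHom_injective _ _).prodMap (Gal.galActionHom_injective _ _)).comp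
      (Gal.restrictProd_injective _ _)
  have hcard : 12 ≤ Nat.card gPoly.Gal :=
    @twelve_le_card_aut _ _ _ (IsSplittingField.splittingField gPoly)
  have hbij : Function.Bijective φ :=
    hinj.bijective_of_nat_card_le (card_perm_rootSets.le.trans hcard)
  have e3 : (X^3 - C 10 : ℚ[X]).rootSet (X^3 - C 10 : ℚ[X]).SplittingField ≃ Fin 3 :=
    Finite.equivFinOfCardEq (by rw [card_rootSet irreducible_cubic, natDegree_X_pow_sub_C])
  have e2 : (X^2 - C 5 : ℚ[X]).rootSet (X^2 - C 5 : ℚ[X]).SplittingField ≃ Fin 2 :=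
    Finite.equivFinOfCardEq (by rw [card_rootSet irreducible_quadratic, natDegree_X_pow_sub_C])
  exact ⟨(MulEquiv.ofBijective φ hbij).trans
    (MulEquiv.prodCongr (Equiv.permCongrHom e3) (Equiv.permCongrHom e2))⟩

/-- The action of the symmetries of the hexagon on its three long diagonals and its two inscribed
equilateral triangles. -/
def dihedralToPerm : DihedralGroup 6 → Equiv.Perm (Fin 3) × Equiv.Perm (Fin 2)
  | .r i => (finRotate 3 ^ i.val, Equiv.swap 0 1 ^ i.val)
  | .sr i => (Equiv.swap 0 1 * finRotate 3 ^ i.val, Equiv.swap 0 1 ^ i.val)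

lemma nonempty_dihedral_equiv :
    Nonempty (DihedralGroup 6 ≃* Equiv.Perm (Fin 3) × Equiv.Perm (Fin 2)) := by
  let φ : DihedralGroup 6 →* Equiv.Perm (Fin 3) × Equiv.Perm (Fin 2) :=
    MonoidHom.mk' dihedralToPerm (by decide)
  have hinj : Function.Injective φ := by
    show Function.Injective dihedralToPerm
    decide
  refine ⟨MulEquiv.ofBijective φ (hinj.bijective_of_nat_card_le ?_)⟩
  rw [Nat.card_prod, Nat.card_perm, Nat.card_perm, DihedralGroup.nat_card]
  simp [Nat.factorial]

lemma nonempty_gal_f_equiv : Nonempty (fPoly.Gal ≃* DihedralGroup 6) := by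
  have e := @IsSplittingField.algEquiv ℚ gPoly.SplittingField _ _ _ fPoly
    (@isSplittingField_f _ _ _ (IsSplittingField.splittingField gPoly))
  obtain ⟨a⟩ := nonempty_gal_equiv
  obtain ⟨b⟩ := nonempty_dihedral_equiv
  have ψ : fPoly.Gal ≃* gPoly.Gal := @AlgEquiv.autCongr _ _ _ _ _ _ _ _ e.symm
  exact ⟨ψ.trans (a.trans b.symm)⟩

theorem stmt_19 (f : ℚ[X])
    (hf : f = X^12 + 6*X^11 - 91*X^10 - 90*X^9 + 3370*X^8 - 14834*X^7 + 38281*X^6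
      - 79946*X^5 + 123730*X^4 - 130890*X^3 + 127789*X^2 - 57586*X + 58381) :
    IsGalois ℚ f.SplittingField ∧
    Module.finrank ℚ f.SplittingField = 12 ∧
    Nonempty (f.Gal ≃* DihedralGroup 6) := by
  obtain rfl : f = fPoly := hf
  obtain ⟨ψ⟩ := nonempty_gal_f_equiv
  -- Over `ℚ`, instance search finds on a splitting field the algebra structure that every field of
  -- characteristic zero carries, whereas `Polynomial.Gal` uses the one of `SplittingField`.
  rw [Subsingleton.elim (DivisionRing.toRatAlgebra : Algebra ℚ fPoly.SplittingField)
    (SplittingField.instAlgebra_1 fPoly)]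
  obtain ⟨hG, hfin⟩ := @isGalois_and_finrank _ _ _ fPoly (IsSplittingField.splittingField fPoly)
  exact ⟨hG, hfin.trans ((Nat.card_congr ψ.toEquiv).trans DihedralGroup.nat_card), ⟨ψ⟩⟩
end
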